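/- Let I be the radical bihomogeneous ideal of a finite set Z = {P₁,…,P_s} of distinct points of X = ℙ¹×ℙ¹. Assume that α*(I^{(6)}) = α*(I^{(5)}) + 1 = α*(I^{(4)}) + 2 = α*(I^{(3)}) + 3 = α*(I^{(2)}) + 4 = α*(I) + 5, i.e. the invariant α* jumps by exactly 1 in five consecutive steps. Then α*(I) = 1; that is, Z is contained in a divisor of bidegree (1,1). -/

import Mathlib

open MvPolynomial

noncomputable section

/-- The bi-graded polynomial ring `ℂ[x₀,x₁,y₀,y₁]`:
the first `Fin 2` summand indexes the variables `x₀,x₁`,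
the second the variables `y₀,y₁`. -/
abbrev R4 : Type := MvPolynomial (Fin 2 ⊕ Fin 2) ℂ

/-- The weight function giving the bi-grading of `R4`. -/
def biWeight : Fin 2 ⊕ Fin 2 → ℕ × ℕ := Sum.elim (fun _ => (1, 0)) (fun _ => (0, 1))

/-- `F` is a (possibly zero) form of bidegree `(p,q)`, i.e. homogeneous of degree `p`
in `x₀,x₁` and homogeneous of degree `q` in `y₀,y₁`. -/
def IsBiForm (F : R4) (p q : ℕ) : Prop :=
  IsWeightedHomogeneous biWeight F (p, q)

/-- The projective line `ℙ¹` over `ℂ`. -/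
abbrev ProjLine := Projectivization ℂ (Fin 2 → ℂ)

/-- The bi-homogeneous prime ideal of a point `P = ([a:b],[c:d])` of `X = ℙ¹ × ℙ¹`,
generated by `b·x₀ - a·x₁` and `d·y₀ - c·y₁`. -/
def pointIdeal (P : ProjLine × ProjLine) : Ideal R4 :=
  Ideal.span
    { C (P.1.rep 1) * X (Sum.inl 0) - C (P.1.rep 0) * X (Sum.inl 1),
      C (P.2.rep 1) * X (Sum.inr 0) - C (P.2.rep 0) * X (Sum.inr 1) }

/-- The `m`-th symbolic power of the radical ideal of the finite set of points `Z ⊂ X`: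
`I^{(m)} = ⋂_{P ∈ Z} I(P)^m`.  For `m = 1` this is the radical ideal `I = I(Z)` itself. -/
def symbPow (Z : Finset (ProjLine × ProjLine)) (m : ℕ) : Ideal R4 :=
  ⨅ P ∈ Z, pointIdeal P ^ m

/-- `α*(J)`: the least `t ≥ 0` such that `J` contains a nonzero form of bidegree `(t,t)`. -/
def alphaStar (J : Ideal R4) : ℕ :=
  sInf {t : ℕ | ∃ F ∈ J, F ≠ 0 ∧ IsBiForm F t t}

/-- `α⁺(J)`: the least `d ≥ 0` such that `J` contains a nonzero form of bidegree `(p,q)`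
with `p + q = d`. -/
def alphaPlus (J : Ideal R4) : ℕ :=
  sInf {d : ℕ | ∃ p q : ℕ, p + q = d ∧ ∃ F ∈ J, F ≠ 0 ∧ IsBiForm F p q}

/-!
Two forms of bidegrees `(d,e)` and `(d',e')` without common factor, vanishing to orders `mᵢ` and
`m'ᵢ` at given points, satisfy `∑ mᵢ m'ᵢ ≤ d e' + d' e`. Letting the second form move in a linear
system without fixed component, one can allow the first to be any nonzero form.

Suppose `α*(I) = k + 1`. Then some `W ⊆ Z` is unisolvent for bidegree `(k,k)`: it consists of
`(k+1)²` points at which a form of bidegree `(k,k)` takes arbitrary values in a unique way. The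
products of an interpolation form of `W` at `P` with a ruling through `P` and one more linear form
in the other variables give the bound `(k+1) m ≤ 2 α*(I^(m))`, so that `k ≤ 1`. If `k = 1`, the
linear systems of bidegrees `(2,2)`, `(2,3)` and `(3,2)` with suitable multiplicities on `W`
exclude every position of the four points of `W` except a `2 × 2` grid. By exchange of points, `Z`
is this grid. The four rulings of a grid pass twice through each of its points, so that
`α*(I^(m)) ≤ m` for even `m`, which contradicts `α*(I^(m)) = m + 1`.
-/

section LinearAlgebra

variable {K V V' ι : Type*} [Field K] [AddCommGroup V] [Module K V] [AddCommGroup V'] [Module K V']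

lemma surjective_of_triangular [Finite ι] (deg : ι → ℕ) (T : V →ₗ[K] ι → K)
    (h : ∀ k, ∃ v, T v k ≠ 0 ∧ ∀ k' ≠ k, deg k' ≤ deg k → T v k' = 0) :
    Function.Surjective T := by
  classical
  have := Fintype.ofFinite ι
  rw [← LinearMap.dualMap_injective_iff, injective_iff_map_eq_zero]
  intro φ hφ
  by_contra hne
  obtain ⟨k₀, hk₀⟩ : ∃ k, φ (Pi.single k 1) ≠ 0 := by
    by_contra! hall
    exact hne (LinearMap.pi_ext' fun k => LinearMap.ext_ring (hall k))
  obtain ⟨k, hk, hmax⟩ := (Finset.univ.filter fun k => φ (Pi.single k 1) ≠ 0).exists_max_image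
    deg ⟨k₀, by simpa using hk₀⟩
  obtain ⟨v, hv, hzero⟩ := h k
  have hsum : φ (T v) = T v k * φ (Pi.single k 1) := by
    conv_lhs => rw [← Finset.univ_sum_single (T v), map_sum]
    have hterm (k') : φ (Pi.single k' (T v k')) = T v k' * φ (Pi.single k' 1) := by
      rw [← smul_eq_mul, ← map_smul, ← Pi.single_smul, smul_eq_mul, mul_one]
    simp only [hterm]
    refine Finset.sum_eq_single k (fun k' _ hk' => ?_) (by simp)
    rcases le_or_gt (deg k') (deg k) with hle | hlt
    · rw [hzero k' hk' hle, zero_mul]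
    · have : φ (Pi.single k' 1) = 0 := by
        by_contra hk'
        exact hlt.not_ge (hmax k' (by simpa using hk'))
      rw [this, mul_zero]
  have : φ (T v) = 0 := LinearMap.congr_fun hφ v
  rw [hsum] at this
  exact mul_ne_zero hv (by simpa using hk) this

lemma finrank_add_finrank_le_of_surjective {T : V →ₗ[K] V'} {E U : Submodule K V}
    [FiniteDimensional K E] (hT : Function.Surjective (T.domRestrict E)) (hU : U ≤ E) :
    Module.finrank K U + Module.finrank K V' ≤ Module.finrank K E + Module.finrank K (U.map T) := by
  have := Submodule.finiteDimensional_of_le hU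
  have hrank (E : Submodule K V) [FiniteDimensional K E] :
      Module.finrank K (E.map T) + Module.finrank K (E ⊓ T.ker : Submodule K V) =
        Module.finrank K E := by
    rw [← (T.domRestrict E).finrank_range_add_finrank_ker, LinearMap.range_domRestrict,
      LinearMap.ker_domRestrict, ← Submodule.finrank_map_subtype_eq E (T.ker.comap E.subtype),
      Submodule.map_comap_subtype]
  have hE := hrank E
  rw [← LinearMap.range_domRestrict, LinearMap.range_eq_top.2 hT, finrank_top] at hE
  have hle : Module.finrank K (U ⊓ T.ker : Submodule K V) ≤
      Module.finrank K (E ⊓ T.ker : Submodule K V) :=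
    Submodule.finrank_mono (inf_le_inf_right _ hU)
  have := hrank U
  omega

lemma finrank_range_le_of_ker_le {V'' : Type*} [AddCommGroup V''] [Module K V'']
    [FiniteDimensional K V] {f : V →ₗ[K] V'} {g : V →ₗ[K] V''} (h : g.ker ≤ f.ker) :
    Module.finrank K f.range ≤ Module.finrank K g.range := by
  have hf := f.finrank_range_add_finrank_ker
  have hg := g.finrank_range_add_finrank_ker
  have := Submodule.finrank_mono h
  omega

lemma exists_isRelPrime_mem {R : Type*} [Infinite K] [CommRing R] [IsDomain R]
    [UniqueFactorizationMonoid R] [Algebra K R] {F : R} (hF : F ≠ 0) (V : Submodule K R)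
    (hV : ∀ π : R, Irreducible π → ∃ G ∈ V, ¬ π ∣ G) : ∃ G ∈ V, IsRelPrime F G := by
  classical
  let factors := (UniqueFactorizationMonoid.factors F).toFinset
  let multiples : factors → Submodule K V := fun π =>
    ((Ideal.span {π.1}).restrictScalars K).comap V.subtype
  obtain ⟨⟨G, hGV⟩, hG⟩ := Submodule.exists_forall_notMem_of_forall_ne_top multiples (by
    rintro ⟨π, hπ⟩ htop
    obtain ⟨G, hGV, hπG⟩ := hV π
      (UniqueFactorizationMonoid.irreducible_of_factor π (Multiset.mem_toFinset.1 hπ))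
    have : (⟨G, hGV⟩ : V) ∈ multiples ⟨π, hπ⟩ := htop ▸ Submodule.mem_top
    exact hπG (Ideal.mem_span_singleton.1 this))
  refine ⟨G, hGV, WfDvdMonoid.isRelPrime_of_no_irreducible_factors (fun h => hF h.1) ?_⟩
  intro π hπ hπF hπG
  obtain ⟨π', hπ', hass⟩ := UniqueFactorizationMonoid.exists_mem_factors_of_dvd hF hπ hπF
  exact hG ⟨π', Multiset.mem_toFinset.2 hπ'⟩
    (Ideal.mem_span_singleton.2 (hass.symm.dvd.trans hπG))

end LinearAlgebra

section BiForms

namespace IsBiForm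

variable {F G : R4} {p q p' q' : ℕ}

protected lemma mul (hF : IsBiForm F p q) (hG : IsBiForm G p' q') :
    IsBiForm (F * G) (p + p') (q + q') :=
  IsWeightedHomogeneous.mul hF hG

protected lemma pow (hF : IsBiForm F p q) (n : ℕ) : IsBiForm (F ^ n) (n * p) (n * q) := by
  simpa [IsBiForm] using IsWeightedHomogeneous.pow hF n

protected lemma prod {ι : Type*} (s : Finset ι) {F : ι → R4} {p q : ι → ℕ}
    (hF : ∀ i ∈ s, IsBiForm (F i) (p i) (q i)) :
    IsBiForm (∏ i ∈ s, F i) (∑ i ∈ s, p i) (∑ i ∈ s, q i) := by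
  simpa [IsBiForm, prod_mk_sum] using IsWeightedHomogeneous.prod s F (fun i => (p i, q i)) hF

lemma X_inl (i : Fin 2) : IsBiForm (X (Sum.inl i)) 1 0 :=
  isWeightedHomogeneous_X ℂ biWeight (Sum.inl i)

lemma X_inr (i : Fin 2) : IsBiForm (X (Sum.inr i)) 0 1 :=
  isWeightedHomogeneous_X ℂ biWeight (Sum.inr i)

end IsBiForm

lemma weight_biWeight (d : Fin 2 ⊕ Fin 2 →₀ ℕ) : Finsupp.weight biWeight d =
    (d (Sum.inl 0) + d (Sum.inl 1), d (Sum.inr 0) + d (Sum.inr 1)) := by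
  rw [Finsupp.weight_apply, Finsupp.sum_fintype _ _ (by simp)]
  ext <;> simp [biWeight, Fintype.sum_sum_type, Fin.sum_univ_two]

lemma IsBiForm.aeval_smul {A : Type*} [CommRing A] [Algebra ℂ A] {F : R4} {p q : ℕ}
    (hF : IsBiForm F p q) (s t : A) (a b : Fin 2 → A) :
    aeval (Sum.elim (s • a) (t • b)) F = s ^ p * t ^ q * aeval (Sum.elim a b) F := by
  simp only [aeval_def, eval₂_eq', Finset.mul_sum]
  refine Finset.sum_congr rfl fun d hd => ?_
  have hdeg := hF (mem_support_iff.1 hd)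
  rw [weight_biWeight, Prod.mk.injEq] at hdeg
  simp only [Fintype.prod_sum_type, Sum.elim_inl, Sum.elim_inr, Fin.prod_univ_two, Pi.smul_apply,
    smul_eq_mul, ← hdeg.1, ← hdeg.2]
  ring

lemma IsBiForm.of_mul_left {F G : R4} {p q i j : ℕ} (hFG : IsBiForm (F * G) p q)
    (hF : IsBiForm F i j) (hne : F * G ≠ 0) : i ≤ p ∧ j ≤ q ∧ IsBiForm G (p - i) (q - j) := by
  let := MvPolynomial.weightedGradedAlgebra (R := ℂ) (w := biWeight)
  let 𝒜 := weightedHomogeneousSubmodule ℂ biWeight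
  have hcomponent : (DirectSum.decompose 𝒜 (F * G) (p, q) : R4) = F * G :=
    DirectSum.decompose_of_mem_same 𝒜 hFG
  have hle : (i, j) ≤ (p, q) := by
    by_contra hle
    rw [DirectSum.coe_decompose_mul_of_left_mem_of_not_le 𝒜 hF hle] at hcomponent
    exact hne hcomponent.symm
  rw [DirectSum.coe_decompose_mul_of_left_mem_of_le 𝒜 hF hle] at hcomponent
  have hG : (DirectSum.decompose 𝒜 G (p - i, q - j) : R4) = G :=
    mul_left_cancel₀ (left_ne_zero_of_mul hne) hcomponent
  refine ⟨hle.1, hle.2, ?_⟩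
  rw [← hG]
  exact (DirectSum.decompose 𝒜 G (p - i, q - j)).2

/-- The vector space `R_{(p,q)}` of forms of bidegree `(p,q)`. -/
def biForms (p q : ℕ) : Submodule ℂ R4 := weightedHomogeneousSubmodule ℂ biWeight (p, q)

lemma mem_biForms {p q : ℕ} {F : R4} : F ∈ biForms p q ↔ IsBiForm F p q := Iff.rfl

/-- The monomials of bidegree `(p,q)`, indexed by the exponents of `x₀` and `y₀`. -/
def biExponentEquiv (p q : ℕ) :
    Fin (p + 1) × Fin (q + 1) ≃ {d : Fin 2 ⊕ Fin 2 →₀ ℕ | Finsupp.weight biWeight d = (p, q)} where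
  toFun x := ⟨Finsupp.equivFunOnFinite.symm
      (Sum.elim ![(x.1 : ℕ), p - x.1] ![(x.2 : ℕ), q - x.2]), by
    rw [Set.mem_ofPred_eq, weight_biWeight]
    ext <;> simp <;> omega⟩
  invFun d := (⟨d.1 (Sum.inl 0), by grind [weight_biWeight]⟩,
    ⟨d.1 (Sum.inr 0), by grind [weight_biWeight]⟩)
  left_inv x := by ext <;> simp
  right_inv d := by
    have hd := d.2
    rw [Set.mem_ofPred_eq, weight_biWeight, Prod.mk.injEq] at hd
    ext (i | i) <;> fin_cases i <;> simp <;> omega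

/-- Coordinates on `R_{(p,q)}` with respect to the monomials. -/
def biFormsEquiv (p q : ℕ) : biForms p q ≃ₗ[ℂ] (Fin (p + 1) × Fin (q + 1) →₀ ℂ) :=
  (LinearEquiv.ofEq _ _
    (weightedHomogeneousSubmodule_eq_finsupp_supported ℂ biWeight (p, q))).trans
    ((AddMonoidAlgebra.supportedEquivFinsupp _).trans
      (Finsupp.domLCongr (biExponentEquiv p q).symm))

instance (p q : ℕ) : FiniteDimensional ℂ (biForms p q) :=
  Module.Finite.equiv (biFormsEquiv p q).symm

lemma finrank_biForms (p q : ℕ) : Module.finrank ℂ (biForms p q) = (p + 1) * (q + 1) := by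
  simp [(biFormsEquiv p q).finrank_eq]

end BiForms

section LinearForms

/-- The determinant of two vectors of the plane, which vanishes if and only if they represent the
same point of `ℙ¹`. -/
def wedge (v w : Fin 2 → ℂ) : ℂ := v 0 * w 1 - v 1 * w 0

lemma wedge_self (v : Fin 2 → ℂ) : wedge v v = 0 := by
  rw [wedge]
  ring

lemma wedge_swap (v w : Fin 2 → ℂ) : wedge w v = -wedge v w := by
  rw [wedge, wedge]
  ring

lemma wedge_rep_eq_zero_iff {v w : ProjLine} : wedge v.rep w.rep = 0 ↔ v = w := by
  have hdet : wedge v.rep w.rep = Matrix.det (Matrix.of ![v.rep, w.rep]) := by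
    simp [wedge, Matrix.det_fin_two]
  have hrows : Matrix.row (Matrix.of ![v.rep, w.rep]) = Projectivization.rep ∘ ![v, w] := by
    ext i
    fin_cases i <;> rfl
  rw [← not_iff_not, ← ne_eq v, ← Projectivization.independent_pair_iff_ne,
    Projectivization.independent_iff, ← hrows, Matrix.linearIndependent_rows_iff_isUnit,
    Matrix.isUnit_iff_isUnit_det, isUnit_iff_ne_zero, hdet]

lemma exists_wedge_rep_eq_one (v : ProjLine) : ∃ w, wedge v.rep w = 1 := by
  obtain ⟨i, hi⟩ := Function.ne_iff.1 v.rep_nonzero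
  fin_cases i
  · exact ⟨![0, (v.rep 0)⁻¹], by simpa [wedge] using mul_inv_cancel₀ hi⟩
  · exact ⟨![-(v.rep 1)⁻¹, 0], by simpa [wedge] using mul_inv_cancel₀ hi⟩

/-- A vector that completes the chosen representative of `v` to a basis of determinant `1`. -/
def complement (v : ProjLine) : Fin 2 → ℂ := (exists_wedge_rep_eq_one v).choose

lemma wedge_rep_complement (v : ProjLine) : wedge v.rep (complement v) = 1 :=
  (exists_wedge_rep_eq_one v).choose_spec

/-- The linear form in `x₀, x₁` that vanishes at `v`. -/
def xForm (v : Fin 2 → ℂ) : R4 := C (v 1) * X (Sum.inl 0) - C (v 0) * X (Sum.inl 1)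

/-- The linear form in `y₀, y₁` that vanishes at `v`. -/
def yForm (v : Fin 2 → ℂ) : R4 := C (v 1) * X (Sum.inr 0) - C (v 0) * X (Sum.inr 1)

namespace IsBiForm

protected lemma xForm (v : Fin 2 → ℂ) : IsBiForm (xForm v) 1 0 :=
  (biForms 1 0).sub_mem (by simpa [C_mul'] using (biForms 1 0).smul_mem (v 1) (IsBiForm.X_inl 0))
    (by simpa [C_mul'] using (biForms 1 0).smul_mem (v 0) (IsBiForm.X_inl 1))

protected lemma yForm (v : Fin 2 → ℂ) : IsBiForm (yForm v) 0 1 :=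
  (biForms 0 1).sub_mem (by simpa [C_mul'] using (biForms 0 1).smul_mem (v 1) (IsBiForm.X_inr 0))
    (by simpa [C_mul'] using (biForms 0 1).smul_mem (v 0) (IsBiForm.X_inr 1))

end IsBiForm

lemma irreducible_C_mul_X_sub_C_mul_X {K σ : Type*} [Field K] {i j : σ} (hij : i ≠ j) {a b : K}
    (hab : a ≠ 0 ∨ b ≠ 0) : Irreducible (C a * X i - C b * X j : MvPolynomial σ K) := by
  classical
  wlog ha : a ≠ 0 generalizing a b i j
  · rw [← (Associated.neg_left (Associated.refl _)).irreducible_iff, neg_sub]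
    exact this hij.symm hab.symm (hab.resolve_left ha)
  rw [sub_eq_add_neg, ← neg_mul, ← map_neg]
  refine irreducible_mul_X_add (C a) (C (-b) * X j) i (by simpa using ha) (by simp) (fun hi => ?_)
    (IsUnit.isRelPrime_left ((isUnit_iff_ne_zero.2 ha).map C))
  have := vars_mul _ _ hi
  rw [vars_C, vars_X] at this
  simp [hij] at this

lemma irreducible_xForm (v : ProjLine) : Irreducible (xForm v.rep) := by
  refine irreducible_C_mul_X_sub_C_mul_X (by simp) ?_
  obtain ⟨i, hi⟩ := Function.ne_iff.1 v.rep_nonzero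
  fin_cases i
  exacts [Or.inr hi, Or.inl hi]

lemma irreducible_yForm (v : ProjLine) : Irreducible (yForm v.rep) := by
  refine irreducible_C_mul_X_sub_C_mul_X (by simp) ?_
  obtain ⟨i, hi⟩ := Function.ne_iff.1 v.rep_nonzero
  fin_cases i
  exacts [Or.inr hi, Or.inl hi]

lemma C_wedge_mul_X_inl (v w : Fin 2 → ℂ) (i : Fin 2) :
    C (wedge v w) * X (Sum.inl i) = C (v i) * xForm w - C (w i) * xForm v := by
  fin_cases i <;> simp only [wedge, xForm, map_sub, map_mul, Fin.zero_eta, Fin.mk_one] <;> ring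

lemma C_wedge_mul_X_inr (v w : Fin 2 → ℂ) (i : Fin 2) :
    C (wedge v w) * X (Sum.inr i) = C (v i) * yForm w - C (w i) * yForm v := by
  fin_cases i <;> simp only [wedge, yForm, map_sub, map_mul, Fin.zero_eta, Fin.mk_one] <;> ring

/-- Evaluation at the chosen representatives of the two coordinates of `P`. -/
def evalAt (P : ProjLine × ProjLine) : R4 →ₐ[ℂ] ℂ := aeval (Sum.elim P.1.rep P.2.rep)

@[simp] lemma evalAt_xForm (P : ProjLine × ProjLine) (v : Fin 2 → ℂ) :
    evalAt P (xForm v) = wedge P.1.rep v := by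
  simp only [evalAt, xForm, wedge, map_sub, map_mul, aeval_X, algHom_C, Algebra.algebraMap_self,
    RingHom.id_apply, Sum.elim_inl]
  ring

@[simp] lemma evalAt_yForm (P : ProjLine × ProjLine) (v : Fin 2 → ℂ) :
    evalAt P (yForm v) = wedge P.2.rep v := by
  simp only [evalAt, yForm, wedge, map_sub, map_mul, aeval_X, algHom_C, Algebra.algebraMap_self,
    RingHom.id_apply, Sum.elim_inr]
  ring

lemma evalAt_xForm_rep_eq_zero_iff {P : ProjLine × ProjLine} {v : ProjLine} :
    evalAt P (xForm v.rep) = 0 ↔ P.1 = v := by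
  rw [evalAt_xForm, wedge_rep_eq_zero_iff]

lemma evalAt_yForm_rep_eq_zero_iff {P : ProjLine × ProjLine} {v : ProjLine} :
    evalAt P (yForm v.rep) = 0 ↔ P.2 = v := by
  rw [evalAt_yForm, wedge_rep_eq_zero_iff]

lemma eq_of_dvd_xForm {π : R4} (hπ : Irreducible π) {v w : ProjLine} (hv : π ∣ xForm v.rep)
    (hw : π ∣ xForm w.rep) : v = w := by
  have hdvd := (hπ.associated_of_dvd (irreducible_xForm v) hv).symm.dvd.trans hw
  have := map_dvd (evalAt (v, v)) hdvd
  rwa [evalAt_xForm_rep_eq_zero_iff.2 rfl, zero_dvd_iff, evalAt_xForm_rep_eq_zero_iff] at this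

lemma eq_of_dvd_yForm {π : R4} (hπ : Irreducible π) {v w : ProjLine} (hv : π ∣ yForm v.rep)
    (hw : π ∣ yForm w.rep) : v = w := by
  have hdvd := (hπ.associated_of_dvd (irreducible_yForm v) hv).symm.dvd.trans hw
  have := map_dvd (evalAt (v, v)) hdvd
  rwa [evalAt_yForm_rep_eq_zero_iff.2 rfl, zero_dvd_iff, evalAt_yForm_rep_eq_zero_iff] at this

lemma not_dvd_yForm_of_dvd_xForm {π : R4} (hπ : Irreducible π) {v w : ProjLine}
    (hv : π ∣ xForm v.rep) : ¬ π ∣ yForm w.rep := by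
  intro hw
  obtain ⟨G, hG⟩ := (hπ.associated_of_dvd (irreducible_xForm v) hv).symm.dvd.trans hw
  have := IsBiForm.of_mul_left (hG ▸ IsBiForm.yForm w.rep) (IsBiForm.xForm v.rep)
    (hG ▸ (irreducible_yForm w).ne_zero)
  omega

end LinearForms

section PointIdeals

lemma xForm_mem_pointIdeal (P : ProjLine × ProjLine) : xForm P.1.rep ∈ pointIdeal P :=
  Ideal.subset_span (Or.inl rfl)

lemma yForm_mem_pointIdeal (P : ProjLine × ProjLine) : yForm P.2.rep ∈ pointIdeal P :=
  Ideal.subset_span (Or.inr rfl)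

lemma evalAt_eq_zero_of_mem {P : ProjLine × ProjLine} {F : R4} (hF : F ∈ pointIdeal P) :
    evalAt P F = 0 := by
  have hle : pointIdeal P ≤ RingHom.ker (evalAt P) := by
    rw [pointIdeal, Ideal.span_le]
    rintro _ (rfl | rfl)
    exacts [evalAt_xForm_rep_eq_zero_iff.2 rfl, evalAt_yForm_rep_eq_zero_iff.2 rfl]
  exact hle hF

lemma IsBiForm.mem_pointIdeal_iff {P : ProjLine × ProjLine} {F : R4} {p q : ℕ}
    (hF : IsBiForm F p q) : F ∈ pointIdeal P ↔ evalAt P F = 0 := by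
  refine ⟨evalAt_eq_zero_of_mem, fun h => ?_⟩
  let mk := Ideal.Quotient.mkₐ ℂ (pointIdeal P)
  have hxP : mk (xForm P.1.rep) = 0 := Ideal.Quotient.eq_zero_iff_mem.2 (xForm_mem_pointIdeal P)
  have hyP : mk (yForm P.2.rep) = 0 := Ideal.Quotient.eq_zero_iff_mem.2 (yForm_mem_pointIdeal P)
  have hx (i : Fin 2) : mk (X (Sum.inl i)) =
      mk (xForm (complement P.1)) * algebraMap ℂ _ (P.1.rep i) := by
    have := congrArg mk (C_wedge_mul_X_inl P.1.rep (complement P.1) i)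
    rw [wedge_rep_complement, C_1, one_mul, map_sub, map_mul, map_mul, hxP, mul_zero,
      sub_zero] at this
    rw [this, mul_comm, ← mk.commutes, algebraMap_eq]
  have hy (i : Fin 2) : mk (X (Sum.inr i)) =
      mk (yForm (complement P.2)) * algebraMap ℂ _ (P.2.rep i) := by
    have := congrArg mk (C_wedge_mul_X_inr P.2.rep (complement P.2) i)
    rw [wedge_rep_complement, C_1, one_mul, map_sub, map_mul, map_mul, hyP, mul_zero,
      sub_zero] at this
    rw [this, mul_comm, ← mk.commutes, algebraMap_eq]
  -- Modulo the ideal of `P`, the coordinates are multiples of those of `P`.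
  have hmk : mk = aeval (Sum.elim (mk (xForm (complement P.1)) • (algebraMap ℂ _ ∘ P.1.rep))
      (mk (yForm (complement P.2)) • (algebraMap ℂ _ ∘ P.2.rep))) := by
    ext (i | i)
    · simpa using hx i
    · simpa using hy i
  have : mk F = 0 := by
    rw [hmk, hF.aeval_smul, ← Sum.comp_elim, aeval_algebraMap_apply]
    change _ * algebraMap ℂ _ (evalAt P F) = 0
    rw [h, map_zero, mul_zero]
  exact Ideal.Quotient.eq_zero_iff_mem.1 this

end PointIdeals

section LocalExpansion

/-- The Taylor expansion at `P` in two local parameters, one along each ruling: a variable is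
replaced by the corresponding coordinate of `P` plus a multiple of the parameter of its ruling. -/
def localExpansion (P : ProjLine × ProjLine) : R4 →ₐ[ℂ] MvPolynomial (Fin 2) ℂ :=
  aeval (Sum.elim
    (fun i => C (P.1.rep i) + C (complement P.1 i) * X 0)
    (fun i => C (P.2.rep i) + C (complement P.2 i) * X 1))

lemma localExpansion_xForm (P : ProjLine × ProjLine) (u : Fin 2 → ℂ) :
    localExpansion P (xForm u) =
      C (wedge P.1.rep u) + C (wedge (complement P.1) u) * X 0 := by
  simp only [localExpansion, xForm, wedge, map_sub, map_mul, aeval_X, algHom_C, algebraMap_eq,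
    Sum.elim_inl]
  ring

lemma localExpansion_yForm (P : ProjLine × ProjLine) (u : Fin 2 → ℂ) :
    localExpansion P (yForm u) =
      C (wedge P.2.rep u) + C (wedge (complement P.2) u) * X 1 := by
  simp only [localExpansion, yForm, wedge, map_sub, map_mul, aeval_X, algHom_C, algebraMap_eq,
    Sum.elim_inr]
  ring

lemma constantCoeff_localExpansion (P : ProjLine × ProjLine) (F : R4) :
    constantCoeff (localExpansion P F) = evalAt P F := by
  have : (aeval (0 : Fin 2 → ℂ)).comp (localExpansion P) = evalAt P := by
    ext (i | i) <;> simp [localExpansion, evalAt]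
  rw [← this, constantCoeff_eq, AlgHom.comp_apply, ← constantCoeff_eq, aeval_zero]
  simp

lemma localExpansion_mem_pow {P : ProjLine × ProjLine} {F : R4} {m : ℕ}
    (hF : F ∈ pointIdeal P ^ m) : localExpansion P F ∈ idealOfVars (Fin 2) ℂ ^ m := by
  have hle : pointIdeal P ≤ (idealOfVars (Fin 2) ℂ).comap (localExpansion P) := by
    rw [pointIdeal, Ideal.span_le]
    have hX (i : Fin 2) : X i ∈ idealOfVars (Fin 2) ℂ := Ideal.subset_span ⟨i, rfl⟩
    rintro F (hF : F = xForm _ ∨ F = yForm _)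
    rcases hF with rfl | rfl
    · rw [SetLike.mem_coe, Ideal.mem_comap, localExpansion_xForm, wedge_self, C_0, zero_add]
      exact Ideal.mul_mem_left _ _ (hX 0)
    · rw [SetLike.mem_coe, Ideal.mem_comap, localExpansion_yForm, wedge_self, C_0, zero_add]
      exact Ideal.mul_mem_left _ _ (hX 1)
  exact ((Ideal.pow_right_mono hle m).trans (Ideal.le_comap_pow _ m)) hF

lemma exists_isBiForm_localExpansion_eq_monomial (P : ProjLine × ProjLine) {p q : ℕ}
    (x : Fin 2 →₀ ℕ) (hp : x 0 ≤ p) (hq : x 1 ≤ q) :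
    ∃ F, IsBiForm F p q ∧ ∃ c ≠ 0, localExpansion P F = monomial x c := by
  refine ⟨xForm P.1.rep ^ x 0 * xForm (complement P.1) ^ (p - x 0) *
    (yForm P.2.rep ^ x 1 * yForm (complement P.2) ^ (q - x 1)), ?_,
    (-1) ^ x 0 * (-1) ^ x 1, by simp, ?_⟩
  · convert (((IsBiForm.xForm _).pow _).mul ((IsBiForm.xForm _).pow _)).mul
      (((IsBiForm.yForm _).pow _).mul ((IsBiForm.yForm _).pow _)) using 1 <;> omega
  · have hx : localExpansion P (xForm (complement P.1)) = 1 := by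
      simp [localExpansion_xForm, wedge_rep_complement, wedge_self]
    have hy : localExpansion P (yForm (complement P.2)) = 1 := by
      simp [localExpansion_yForm, wedge_rep_complement, wedge_self]
    have hxP : localExpansion P (xForm P.1.rep) = C (-1) * X 0 := by
      simp [localExpansion_xForm, wedge_self, wedge_swap P.1.rep, wedge_rep_complement]
    have hyP : localExpansion P (yForm P.2.rep) = C (-1) * X 1 := by
      simp [localExpansion_yForm, wedge_self, wedge_swap P.2.rep, wedge_rep_complement]
    rw [monomial_eq, Finsupp.prod_fintype _ _ (by simp), Fin.prod_univ_two]
    simp only [map_mul, map_pow, hx, hy, hxP, hyP, one_pow, mul_one]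
    ring

lemma exists_isBiForm_vanishing_one {P Q : ProjLine × ProjLine} (h : P ≠ Q) :
    ∃ L, IsBiForm L 1 1 ∧ L ∈ pointIdeal Q ∧ evalAt P L ≠ 0 := by
  by_cases h1 : P.1 = Q.1
  · have h2 : P.2 ≠ Q.2 := fun h2 => h (Prod.ext h1 h2)
    refine ⟨xForm (complement P.1) * yForm Q.2.rep, (IsBiForm.xForm _).mul (IsBiForm.yForm _),
      Ideal.mul_mem_left _ _ (yForm_mem_pointIdeal Q), ?_⟩
    rwa [map_mul, evalAt_xForm, wedge_rep_complement, one_mul, Ne, evalAt_yForm_rep_eq_zero_iff]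
  · refine ⟨xForm Q.1.rep * yForm (complement P.2), (IsBiForm.xForm _).mul (IsBiForm.yForm _),
      Ideal.mul_mem_right _ _ (xForm_mem_pointIdeal Q), ?_⟩
    rwa [map_mul, evalAt_yForm, wedge_rep_complement, mul_one, Ne, evalAt_xForm_rep_eq_zero_iff]

end LocalExpansion

section Jets

variable {ι : Type*}

/-- The indices of the Taylor coefficients of degree less than `s i` at the point `P i`, for all
`i`. -/
abbrev JetIndex (s : ι → ℕ) : Type _ :=
  Σ i, Σ n : Fin (s i), (Finset.univ : Finset (Fin 2)).finsuppAntidiag (n : ℕ)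

lemma card_jetIndex [Fintype ι] (s : ι → ℕ) :
    Fintype.card (JetIndex s) = ∑ i, ∑ n ∈ Finset.range (s i), (n + 1) := by
  simp [Finset.card_finsuppAntidiag_nat_eq_multichoose, Finset.sum_range]

lemma JetIndex.degree_eq {s : ι → ℕ} (k : JetIndex s) : k.2.2.1.degree = k.2.1 := by
  rw [Finsupp.degree_eq_sum]
  exact (Finset.mem_finsuppAntidiag.1 k.2.2.2).1

lemma JetIndex.ext {s : ι → ℕ} {k k' : JetIndex s} (hpoint : k.1 = k'.1)
    (hexp : k.2.2.1 = k'.2.2.1) : k = k' := by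
  have hdeg : (k.2.1 : ℕ) = k'.2.1 := by rw [← k.degree_eq, ← k'.degree_eq, hexp]
  obtain ⟨i, ⟨n, hn⟩, x, hx⟩ := k
  obtain ⟨i', ⟨n', hn'⟩, x', hx'⟩ := k'
  dsimp only at hpoint hexp hdeg
  subst hpoint hexp hdeg
  rfl

variable (P : ι → ProjLine × ProjLine) (s : ι → ℕ)

/-- The truncated Taylor expansions of a polynomial at the points `P i`, up to degree `s i - 1`. -/
def jets : R4 →ₗ[ℂ] JetIndex s → ℂ :=
  LinearMap.pi fun k => (lcoeff ℂ k.2.2.1).comp (localExpansion (P k.1)).toLinearMap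

lemma jets_apply (F : R4) (k : JetIndex s) :
    jets P s F k = coeff k.2.2.1 (localExpansion (P k.1) F) := rfl

lemma jets_eq_zero_iff {F : R4} :
    jets P s F = 0 ↔ ∀ i, localExpansion (P i) F ∈ idealOfVars (Fin 2) ℂ ^ s i := by
  simp only [mem_pow_idealOfVars_iff', funext_iff, jets_apply, Pi.zero_apply]
  constructor
  · intro h i x hx
    exact h ⟨i, ⟨x.degree, hx⟩, x, by simp [Finsupp.degree_eq_sum]⟩
  · rintro h k
    exact h k.1 _ (k.degree_eq.trans_lt k.2.1.2)

variable {P s} [Fintype ι]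

lemma exists_isBiForm_vanishing_pow (hP : Function.Injective P) (i : ι) (N : ℕ) :
    ∃ M, IsBiForm M ((Fintype.card ι - 1) * N) ((Fintype.card ι - 1) * N) ∧
      (∀ j ≠ i, M ∈ pointIdeal (P j) ^ N) ∧ evalAt (P i) M ≠ 0 := by
  classical
  choose L hL hmem hne using fun j : {j // j ≠ i} =>
    exists_isBiForm_vanishing_one (hP.ne j.2.symm)
  refine ⟨∏ j, L j ^ N, ?_, fun j hj => ?_, ?_⟩
  · simpa [Fintype.card_subtype_compl] using
      IsBiForm.prod Finset.univ fun j _ => (hL j).pow N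
  · exact Ideal.mem_of_dvd _ (Finset.dvd_prod_of_mem _ (Finset.mem_univ ⟨j, hj⟩))
      (Ideal.pow_mem_pow (hmem ⟨j, hj⟩) N)
  · simpa [Finset.prod_eq_zero_iff] using fun j hj h => absurd h (hne ⟨j, hj⟩)

lemma coeff_monomial_mul_of_degree_le {σ R : Type*} [CommSemiring R] {x y : σ →₀ ℕ}
    (hne : y ≠ x) (hle : y.degree ≤ x.degree) (c : R) (G : MvPolynomial σ R) :
    coeff y (monomial x c * G) = 0 := by
  classical
  rw [coeff_monomial_mul', if_neg]
  intro hxy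
  obtain ⟨z, rfl⟩ := exists_add_of_le hxy
  rw [map_add] at hle
  have hz : z.degree = 0 := by omega
  rw [Finsupp.degree_eq_zero_iff] at hz
  exact hne (by rw [hz, add_zero])

lemma jets_domRestrict_surjective (hP : Function.Injective P) {N p q : ℕ} (hs : ∀ i, s i ≤ N)
    (hp : Fintype.card ι * N ≤ p) (hq : Fintype.card ι * N ≤ q) :
    Function.Surjective ((jets P s).domRestrict (biForms p q)) := by
  refine surjective_of_triangular (fun k => (k.2.1 : ℕ)) _ fun k => ?_
  obtain ⟨M, hM, hMvanish, hMne⟩ := exists_isBiForm_vanishing_pow hP k.1 N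
  have hdeg : k.2.2.1 0 + k.2.2.1 1 < N := by
    have := k.degree_eq
    rw [Finsupp.degree_eq_sum, Fin.sum_univ_two] at this
    exact this.trans_lt (k.2.1.2.trans_le (hs k.1))
  have hcard : (Fintype.card ι - 1) * N + N = Fintype.card ι * N := by
    rw [← Nat.succ_mul, Nat.succ_eq_add_one, Nat.sub_add_cancel (Fintype.card_pos_iff.2 ⟨k.1⟩)]
  obtain ⟨A, hA, c, hc, hAc⟩ := exists_isBiForm_localExpansion_eq_monomial (P k.1) k.2.2.1
    (p := p - (Fintype.card ι - 1) * N) (q := q - (Fintype.card ι - 1) * N) (by omega) (by omega)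
  have hAM : IsBiForm (A * M) p q := by
    convert hA.mul hM using 1 <;> omega
  refine ⟨⟨A * M, mem_biForms.2 hAM⟩, ?_, fun k' hne hle => ?_⟩
  · have := coeff_monomial_mul 0 k.2.2.1 c (localExpansion (P k.1) M)
    rw [add_zero, ← constantCoeff_eq, constantCoeff_localExpansion, ← hAc, ← map_mul] at this
    rw [LinearMap.domRestrict_apply, jets_apply, this]
    exact mul_ne_zero hc hMne
  · rw [LinearMap.domRestrict_apply, jets_apply]
    by_cases hi : k'.1 = k.1
    · have hexp : k'.2.2.1 ≠ k.2.2.1 := fun hexp => hne (JetIndex.ext hi hexp)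
      have hAM : localExpansion (P k'.1) (A * M) =
          monomial k.2.2.1 c * localExpansion (P k.1) M := by
        rw [hi, map_mul, hAc]
      rw [hAM]
      exact coeff_monomial_mul_of_degree_le hexp (by rwa [k'.degree_eq, k.degree_eq]) c _
    · have hmem := localExpansion_mem_pow (Ideal.mul_mem_left _ A (hMvanish k'.1 hi))
      exact (mem_pow_idealOfVars_iff' N _).1 hmem _
        (k'.degree_eq.trans_lt (k'.2.1.2.trans_le (hs _)))

end Jets

section Bezout

lemma sum_range_add_succ (a b : ℕ) : ∑ n ∈ Finset.range (a + b), (n + 1) =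
    ∑ n ∈ Finset.range a, (n + 1) + ∑ n ∈ Finset.range b, (n + 1) + a * b := by
  induction b with
  | zero => simp
  | succ b ih =>
    rw [← add_assoc, Finset.sum_range_succ, Finset.sum_range_succ, ih]
    ring

variable {ι : Type*} [Fintype ι] {P : ι → ProjLine × ProjLine} {m m' : ι → ℕ}
variable {F G : R4} {d e d' e' : ℕ}

lemma card_jetIndex_add (m m' : ι → ℕ) : Fintype.card (JetIndex (m + m')) =
    Fintype.card (JetIndex m) + Fintype.card (JetIndex m') + ∑ i, m i * m' i := by
  rw [card_jetIndex, card_jetIndex, card_jetIndex, ← Finset.sum_add_distrib,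
    ← Finset.sum_add_distrib]
  exact Finset.sum_congr rfl fun i _ => sum_range_add_succ _ _

lemma finrank_map_mulLeft (hF : F ≠ 0) (V : Submodule ℂ R4) :
    Module.finrank ℂ (V.map (LinearMap.mulLeft ℂ F)) = Module.finrank ℂ V :=
  (Submodule.equivMapOfInjective _ (mul_right_injective₀ hF) V).finrank_eq.symm

lemma map_mulLeft_biForms_le (hF : IsBiForm F d e) (p q : ℕ) :
    (biForms p q).map (LinearMap.mulLeft ℂ F) ≤ biForms (d + p) (e + q) := by
  rintro _ ⟨H, hH, rfl⟩
  exact hF.mul hH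

lemma finrank_map_jets_mulLeft_le (hF : ∀ i, F ∈ pointIdeal (P i) ^ m i) (V : Submodule ℂ R4)
    [FiniteDimensional ℂ V] :
    Module.finrank ℂ ((V.map (LinearMap.mulLeft ℂ F)).map (jets P (m + m'))) ≤
      Fintype.card (JetIndex m') := by
  have hker : ((jets P m').domRestrict V).ker ≤
      (((jets P (m + m')).comp (LinearMap.mulLeft ℂ F)).domRestrict V).ker := by
    intro H hH
    rw [LinearMap.mem_ker, LinearMap.domRestrict_apply] at hH ⊢
    rw [LinearMap.comp_apply, LinearMap.mulLeft_apply, jets_eq_zero_iff]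
    intro i
    rw [map_mul, Pi.add_apply, pow_add]
    exact Ideal.mul_mem_mul (localExpansion_mem_pow (hF i)) ((jets_eq_zero_iff P m').1 hH i)
  rw [← Submodule.map_comp, ← LinearMap.range_domRestrict]
  refine (finrank_range_le_of_ker_le hker).trans ((Submodule.finrank_le _).trans ?_)
  rw [Module.finrank_fintype_fun_eq_card]

lemma map_mulLeft_inf_le (hFG : IsRelPrime F G) (hG0 : G ≠ 0) (hG : IsBiForm G d' e') (r : ℕ) :
    (biForms (d' + r) (e' + r)).map (LinearMap.mulLeft ℂ F) ⊓
      (biForms (d + r) (e + r)).map (LinearMap.mulLeft ℂ G) ≤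
        (biForms r r).map (LinearMap.mulLeft ℂ (F * G)) := by
  rintro _ ⟨⟨H, hH, rfl⟩, K, -, hHK⟩
  simp only [LinearMap.mulLeft_apply] at hHK ⊢
  obtain ⟨L, rfl⟩ : G ∣ H := hFG.symm.dvd_of_dvd_mul_left ⟨K, hHK.symm⟩
  rcases eq_or_ne L 0 with rfl | hL
  · simp
  have hL' := (IsBiForm.of_mul_left hH hG (mul_ne_zero hG0 hL)).2.2
  rw [Nat.add_sub_cancel_left, Nat.add_sub_cancel_left] at hL'
  exact ⟨L, hL', mul_assoc F G L⟩

theorem bezout_inequality (hP : Function.Injective P) (hFG : IsRelPrime F G) (hF0 : F ≠ 0)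
    (hG0 : G ≠ 0) (hF : IsBiForm F d e) (hG : IsBiForm G d' e')
    (hFm : ∀ i, F ∈ pointIdeal (P i) ^ m i) (hGm : ∀ i, G ∈ pointIdeal (P i) ^ m' i) :
    ∑ i, m i * m' i ≤ d * e' + d' * e := by
  obtain ⟨r, hr⟩ : ∃ r, Fintype.card ι * ∑ i, (m + m') i = r := ⟨_, rfl⟩
  let E := biForms (d + (d' + r)) (e + (e' + r))
  let A := (biForms (d' + r) (e' + r)).map (LinearMap.mulLeft ℂ F)
  let B := (biForms (d + r) (e + r)).map (LinearMap.mulLeft ℂ G)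
  have hAE : A ≤ E := map_mulLeft_biForms_le hF _ _
  have hBE : B ≤ E := by
    have := map_mulLeft_biForms_le hG (d + r) (e + r)
    rwa [add_left_comm d', add_left_comm e'] at this
  have hjets : Function.Surjective ((jets P (m + m')).domRestrict E) :=
    jets_domRestrict_surjective hP
      (fun i => Finset.single_le_sum (fun _ _ => Nat.zero_le _) (Finset.mem_univ i))
      (by omega) (by omega)
  have hsup := finrank_add_finrank_le_of_surjective hjets (sup_le hAE hBE)
  have hmap : Module.finrank ℂ ((A ⊔ B).map (jets P (m + m'))) ≤
      Fintype.card (JetIndex m') + Fintype.card (JetIndex m) := by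
    rw [Submodule.map_sup]
    refine (Submodule.finrank_add_le_finrank_add_finrank _ _).trans
      (add_le_add (finrank_map_jets_mulLeft_le hFm _) ?_)
    rw [add_comm m m']
    exact finrank_map_jets_mulLeft_le hGm _
  have hinf : Module.finrank ℂ (A ⊓ B : Submodule ℂ R4) ≤ (r + 1) * (r + 1) :=
    (Submodule.finrank_mono (map_mulLeft_inf_le hFG hG0 hG r)).trans_eq (by
      rw [finrank_map_mulLeft (mul_ne_zero hF0 hG0), finrank_biForms])
  have hsum := Submodule.finrank_sup_add_finrank_inf_eq A B
  rw [finrank_map_mulLeft hF0, finrank_map_mulLeft hG0, finrank_biForms, finrank_biForms] at hsum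
  rw [finrank_biForms, Module.finrank_fintype_fun_eq_card, card_jetIndex_add] at hsup
  have hcount : (d' + r + 1) * (e' + r + 1) + (d + r + 1) * (e + r + 1) + ∑ i, m i * m' i ≤
      (d + (d' + r) + 1) * (e + (e' + r) + 1) + (r + 1) * (r + 1) := by omega
  linarith only [hcount]

theorem bezout_inequality_of_movable (hP : Function.Injective P) (hF0 : F ≠ 0)
    (hF : IsBiForm F d e) (hFm : ∀ i, F ∈ pointIdeal (P i) ^ m i)
    (hmove : ∀ π : R4, Irreducible π →
      ∃ G, IsBiForm G d' e' ∧ (∀ i, G ∈ pointIdeal (P i) ^ m' i) ∧ ¬ π ∣ G) :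
    ∑ i, m i * m' i ≤ d * e' + d' * e := by
  let V : Submodule ℂ R4 :=
    biForms d' e' ⊓ ⨅ i, (pointIdeal (P i) ^ m' i).restrictScalars ℂ
  have hV {G : R4} : G ∈ V ↔ IsBiForm G d' e' ∧ ∀ i, G ∈ pointIdeal (P i) ^ m' i := by
    simp [V, mem_biForms]
  have hX : Irreducible (X (Sum.inl 0) : R4) := X_prime.irreducible
  obtain ⟨G, hGV, hFG⟩ := exists_isRelPrime_mem (mul_ne_zero hX.ne_zero hF0) V fun π hπ => by
    obtain ⟨G, hG, hGm, hπG⟩ := hmove π hπ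
    exact ⟨G, hV.2 ⟨hG, hGm⟩, hπG⟩
  have hG0 : G ≠ 0 := by
    rintro rfl
    exact hX.not_isUnit (isUnit_of_mul_isUnit_left (isRelPrime_zero_right.1 hFG))
  exact bezout_inequality hP hFG.of_mul_left_right hF0 hG0 hF (hV.1 hGV).1 hFm (hV.1 hGV).2

end Bezout

section SwapRulings

/-- Exchange of the two factors of `ℙ¹ × ℙ¹`, on the coordinate ring. -/
def swapRulings : R4 →ₐ[ℂ] R4 := rename Sum.swap

lemma swapRulings_injective : Function.Injective swapRulings :=
  rename_injective _ Sum.swap_leftInverse.injective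

lemma IsBiForm.swapRulings {F : R4} {p q : ℕ} (hF : IsBiForm F p q) :
    IsBiForm (swapRulings F) q p := by
  intro d hd
  obtain ⟨c, rfl, hc⟩ := coeff_rename_ne_zero _ _ _ hd
  have hc := hF hc
  rw [weight_biWeight, Prod.mk.injEq] at hc ⊢
  have hcoord (i) : c.mapDomain Sum.swap (Sum.swap i) = c i :=
    Finsupp.mapDomain_apply Sum.swap_leftInverse.injective c i
  exact ⟨by rw [← hc.2, ← hcoord, ← hcoord]; rfl, by rw [← hc.1, ← hcoord, ← hcoord]; rfl⟩

lemma swapRulings_mem_pow {v h : ProjLine} {F : R4} {m : ℕ} (hF : F ∈ pointIdeal (v, h) ^ m) :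
    swapRulings F ∈ pointIdeal (h, v) ^ m := by
  have hle : pointIdeal (v, h) ≤ (pointIdeal (h, v)).comap swapRulings := by
    rw [pointIdeal, Ideal.span_le]
    have hx : swapRulings (xForm v.rep) = yForm v.rep := by
      simp [swapRulings, xForm, yForm]
    have hy : swapRulings (yForm h.rep) = xForm h.rep := by
      simp [swapRulings, xForm, yForm]
    rintro G (hG : G = xForm _ ∨ G = yForm _)
    rw [SetLike.mem_coe, Ideal.mem_comap]
    rcases hG with rfl | rfl
    · exact hx ▸ yForm_mem_pointIdeal (h, v)
    · exact hy ▸ xForm_mem_pointIdeal (h, v)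
  exact ((Ideal.pow_right_mono hle m).trans (Ideal.le_comap_pow _ m)) hF

end SwapRulings

section Unisolvence

/-- Evaluation of the forms of bidegree `(p,q)` at the points of `W`. -/
def evalOn (W : Finset (ProjLine × ProjLine)) (p q : ℕ) : biForms p q →ₗ[ℂ] W → ℂ :=
  LinearMap.pi fun P => (evalAt P.1).toLinearMap.domRestrict (biForms p q)

/-- `W` is unisolvent for bidegree `(p,q)` if a form of bidegree `(p,q)` can be prescribed
arbitrarily and in a unique way on `W`. -/
def IsUnisolvent (W : Finset (ProjLine × ProjLine)) (p q : ℕ) : Prop :=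
  Function.Bijective (evalOn W p q)

variable {W Z : Finset (ProjLine × ProjLine)} {p q : ℕ} {P Q : ProjLine × ProjLine} {F π : R4}

lemma evalOn_injective_iff : Function.Injective (evalOn W p q) ↔
    ∀ F, IsBiForm F p q → (∀ P ∈ W, evalAt P F = 0) → F = 0 := by
  rw [injective_iff_map_eq_zero]
  constructor
  · intro h F hF hFW
    exact congrArg Subtype.val (h ⟨F, hF⟩ (funext fun P => hFW P.1 P.2))
  · rintro h ⟨F, hF⟩ hFW
    exact Subtype.ext (h F hF fun P hP => congrFun hFW ⟨P, hP⟩)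

lemma exists_isUnisolvent_subset (hZ : ∀ F, IsBiForm F p q → (∀ P ∈ Z, evalAt P F = 0) → F = 0) :
    ∃ W ⊆ Z, IsUnisolvent W p q := by
  classical
  obtain ⟨W, hWZ, hW⟩ := exists_minimal_le_of_wellFoundedLT
    (fun W => Function.Injective (evalOn W p q)) Z (evalOn_injective_iff.2 hZ)
  refine ⟨W, hWZ, hW.prop, surjective_of_triangular 0 _ fun P => ?_⟩
  have herase := hW.not_prop_of_lt (Finset.erase_ssubset P.2)
  rw [evalOn_injective_iff] at herase
  push Not at herase
  obtain ⟨F, hF, hFW, hF0⟩ := herase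
  have hzero (Q : W) (hQ : Q ≠ P) : evalAt Q.1 F = 0 :=
    hFW Q.1 (Finset.mem_erase.2 ⟨fun h => hQ (Subtype.ext h), Q.2⟩)
  refine ⟨⟨F, hF⟩, fun hFP => hF0 (evalOn_injective_iff.1 hW.prop F hF fun Q hQ => ?_),
    fun Q hQ _ => hzero Q hQ⟩
  rcases eq_or_ne (⟨Q, hQ⟩ : W) P with rfl | hne
  · exact hFP
  · exact hzero ⟨Q, hQ⟩ hne

namespace IsUnisolvent

lemma card_eq (hW : IsUnisolvent W p q) : W.card = (p + 1) * (q + 1) := by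
  rw [← finrank_biForms, (LinearEquiv.ofBijective _ hW).finrank_eq,
    Module.finrank_fintype_fun_eq_card, Fintype.card_coe]

lemma of_card_eq (hcard : W.card = (p + 1) * (q + 1))
    (h : ∀ F, IsBiForm F p q → (∀ P ∈ W, evalAt P F = 0) → F = 0) : IsUnisolvent W p q := by
  have hinj := evalOn_injective_iff.2 h
  refine ⟨hinj, (LinearMap.injective_iff_surjective_of_finrank_eq_finrank ?_).1 hinj⟩
  rw [finrank_biForms, Module.finrank_fintype_fun_eq_card, Fintype.card_coe, hcard]

lemma eq_zero (hW : IsUnisolvent W p q) (hF : IsBiForm F p q) (hFW : ∀ P ∈ W, evalAt P F = 0) :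
    F = 0 :=
  evalOn_injective_iff.1 hW.1 F hF hFW

open Classical in
/-- The interpolation form of bidegree `(p,q)` that takes the value `1` at `P` and vanishes at the
other points of `W`. -/
def lagrange (hW : IsUnisolvent W p q) (P : ProjLine × ProjLine) : R4 :=
  (LinearEquiv.ofBijective _ hW).symm fun Q => if Q.1 = P then 1 else 0

lemma isBiForm_lagrange (hW : IsUnisolvent W p q) (P : ProjLine × ProjLine) :
    IsBiForm (hW.lagrange P) p q :=
  ((LinearEquiv.ofBijective _ hW).symm _).2

open Classical in
lemma evalAt_lagrange (hW : IsUnisolvent W p q) (hQ : Q ∈ W) (P : ProjLine × ProjLine) :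
    evalAt Q (hW.lagrange P) = if Q = P then 1 else 0 :=
  congrFun ((LinearEquiv.ofBijective _ hW).apply_symm_apply
    fun Q => if Q.1 = P then 1 else 0) ⟨Q, hQ⟩

lemma evalAt_lagrange_of_ne (hW : IsUnisolvent W p q) (hQ : Q ∈ W) (hQP : Q ≠ P) :
    evalAt Q (hW.lagrange P) = 0 := by
  rw [hW.evalAt_lagrange hQ, if_neg hQP]

lemma sum_smul_lagrange (hW : IsUnisolvent W p q) (hF : IsBiForm F p q) :
    ∑ P ∈ W, evalAt P F • hW.lagrange P = F := by
  rw [← sub_eq_zero]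
  refine hW.eq_zero ((biForms p q).sub_mem
    ((biForms p q).sum_mem fun P _ => (biForms p q).smul_mem _ (hW.isBiForm_lagrange P)) hF)
    fun Q hQ => ?_
  classical
  simp [hW.evalAt_lagrange hQ, hQ]

lemma dvd_of_forall_dvd_lagrange (hW : IsUnisolvent W p q) (hF : IsBiForm F p q)
    (h : ∀ P ∈ W, evalAt P F = 0 ∨ π ∣ hW.lagrange P) : π ∣ F := by
  rw [← hW.sum_smul_lagrange hF]
  refine Finset.dvd_sum fun P hP => ?_
  rcases h P hP with hP | hP
  · rw [hP, zero_smul]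
    exact dvd_zero π
  · exact dvd_smul_of_dvd _ hP

lemma exists_insert_erase [DecidableEq (ProjLine × ProjLine)] (hW : IsUnisolvent W p q)
    (hQ : Q ∉ W) : ∃ P ∈ W, IsUnisolvent (insert Q (W.erase P)) p q := by
  obtain ⟨P, hP, hne⟩ : ∃ P ∈ W, evalAt Q (hW.lagrange P) ≠ 0 := by
    by_contra! h
    have hF := ((IsBiForm.xForm (complement Q.1)).pow p).mul
      ((IsBiForm.yForm (complement Q.2)).pow q)
    rw [mul_one, mul_zero, mul_zero, mul_one, add_zero, zero_add] at hF
    have := congrArg (evalAt Q) (hW.sum_smul_lagrange hF)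
    rw [map_sum, Finset.sum_eq_zero fun P hP => by rw [map_smul, h P hP, smul_zero]] at this
    simp [wedge_rep_complement] at this
  refine ⟨P, hP, of_card_eq ?_ fun F hF hFW => ?_⟩
  · rw [Finset.card_insert_of_notMem fun h => hQ (Finset.mem_of_mem_erase h),
      Finset.card_erase_add_one hP, hW.card_eq]
  · have hF' : F = evalAt P F • hW.lagrange P :=
      (hW.sum_smul_lagrange hF).symm.trans (Finset.sum_eq_single_of_mem P hP fun P' hP' hne' => by
        rw [hFW P' (Finset.mem_insert_of_mem (Finset.mem_erase.2 ⟨hne', hP'⟩)), zero_smul])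
    have hFQ := hFW Q (Finset.mem_insert_self _ _)
    rw [hF', map_smul, smul_eq_mul, mul_eq_zero, or_iff_left hne] at hFQ
    rw [hF', hFQ, zero_smul]

end IsUnisolvent

end Unisolvence

section FourPoints

lemma mem_of_subset_of_card_eq_four {α : Type*} [DecidableEq α] {s : Finset α} (hs : s.card = 4)
    {a b c d : α} (hsub : {a, b, c, d} ⊆ s) (hab : a ≠ b) (hac : a ≠ c) (had : a ≠ d) (hbc : b ≠ c)
    (hbd : b ≠ d) (hcd : c ≠ d) {x : α} (hx : x ∈ s) : x = a ∨ x = b ∨ x = c ∨ x = d := by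
  have hcard : ({a, b, c, d} : Finset α).card = 4 := by simp [*]
  rw [← Finset.eq_of_subset_of_card_le hsub (by rw [hs, hcard])] at hx
  simpa using hx

variable {α β : Type*} {W : Finset (α × β)} (hcard : W.card = 4)
  (hmiss : ∀ v h, ∃ P ∈ W, P.1 ≠ v ∧ P.2 ≠ h)
  (hshare : ∀ P ∈ W, ∃ Q ∈ W, Q ≠ P ∧ (Q.1 = P.1 ∨ Q.2 = P.2))
  (hvert : ∀ {v v' h₁ h₂ h₃ h₄}, (v, h₁) ∈ W → (v, h₂) ∈ W → (v', h₃) ∈ W → (v', h₄) ∈ W →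
    v ≠ v' → h₁ ≠ h₂ → h₃ ≠ h₄ → h₁ = h₃ ∨ h₁ = h₄)
  (hhor : ∀ {h h' v₁ v₂ v₃ v₄}, (v₁, h) ∈ W → (v₂, h) ∈ W → (v₃, h') ∈ W → (v₄, h') ∈ W →
    h ≠ h' → v₁ ≠ v₂ → v₃ ≠ v₄ → v₁ = v₃ ∨ v₁ = v₄)

include hcard hmiss hshare hvert hhor

lemma corner_mem_of_corner_mem {v v' h h'} (h0 : (v, h) ∈ W) (h1 : (v', h') ∈ W) (h2 : (v, h') ∈ W)
    (hv : v ≠ v') (hh : h ≠ h') : (v', h) ∈ W := by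
  classical
  obtain ⟨⟨a, b⟩, h3, ha : a ≠ v, hb : b ≠ h'⟩ := hmiss v h'
  obtain ⟨⟨c, d⟩, hQ, hne, hQ' : c = a ∨ d = b⟩ := hshare _ h3
  have hsub : {(v, h), (v', h'), (v, h'), (a, b)} ⊆ W := by
    simp only [Finset.insert_subset_iff, Finset.singleton_subset_iff]
    exact ⟨h0, h1, h2, h3⟩
  rcases mem_of_subset_of_card_eq_four hcard hsub (by simp [hv]) (by simp [hh]) (by simp [ha.symm])
    (by simp [hv.symm]) (by simp [hb.symm]) (by simp [ha.symm]) hQ with hQ | hQ | hQ | hQ <;>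
    obtain ⟨rfl, rfl⟩ := Prod.mk.inj hQ
  · obtain rfl := hQ'.resolve_left ha.symm
    obtain rfl := (hhor h3 h0 h2 h1 hh ha hv).resolve_left ha
    exact h3
  · obtain rfl := hQ'.resolve_right hb.symm
    obtain rfl := (hvert h3 h1 h0 h2 ha hb hh).resolve_right hb
    exact h3
  · exact (hQ'.elim ha.symm hb.symm).elim
  · exact (hne rfl).elim

lemma exists_corner_mem {v v' h h'} (h0 : (v, h) ∈ W) (h1 : (v', h') ∈ W) (hv : v' ≠ v)
    (hh : h' ≠ h) : (v, h') ∈ W ∨ (v', h) ∈ W := by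
  classical
  by_contra! hnot
  obtain ⟨⟨a, b⟩, h2, hne2, h2' : a = v ∨ b = h⟩ := hshare _ h0
  obtain ⟨⟨c, d⟩, h3, hne3, h3' : c = v' ∨ d = h'⟩ := hshare _ h1
  have hW {P} (hP : P ∈ W) (h23 : (a, b) ≠ (c, d)) (h12 : (v', h') ≠ (a, b))
      (h03 : (v, h) ≠ (c, d)) : P = (v, h) ∨ P = (v', h') ∨ P = (a, b) ∨ P = (c, d) := by
    refine mem_of_subset_of_card_eq_four hcard ?_ (by simp [hv.symm]) hne2.symm h03 h12 hne3.symm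
      h23 hP
    simp only [Finset.insert_subset_iff, Finset.singleton_subset_iff]
    exact ⟨h0, h1, h2, h3⟩
  rcases h2' with rfl | rfl <;> rcases h3' with rfl | rfl
  · rcases hvert h0 h2 h1 h3 hv.symm (by grind) (by grind) with rfl | rfl
    exacts [hh rfl, hnot.2 h3]
  · obtain ⟨P, hP, hP1, hP2⟩ := hmiss a d
    rcases hW hP (by grind) (by grind) (by grind) with rfl | rfl | rfl | rfl <;> contradiction
  · obtain ⟨P, hP, hP1, hP2⟩ := hmiss c b
    rcases hW hP (by grind) (by grind) (by grind) with rfl | rfl | rfl | rfl <;> contradiction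
  · rcases hhor h0 h2 h1 h3 hh.symm (by grind) (by grind) with rfl | rfl
    exacts [hv rfl, hnot.1 h3]

lemma exists_eq_product_of_card_eq_four :
    ∃ (s : Finset α) (t : Finset β), s.card = 2 ∧ t.card = 2 ∧ W = s ×ˢ t := by
  classical
  have hcorner {v v' h h'} := corner_mem_of_corner_mem hcard hmiss hshare hvert hhor
    (v := v) (v' := v') (h := h) (h' := h')
  obtain ⟨⟨v, h⟩, h0⟩ : W.Nonempty := Finset.card_pos.1 (by omega)
  obtain ⟨⟨v', h'⟩, h1, hv : v' ≠ v, hh : h' ≠ h⟩ := hmiss v h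
  have hboth : (v, h') ∈ W ∧ (v', h) ∈ W := by
    rcases exists_corner_mem hcard hmiss hshare hvert hhor h0 h1 hv hh with h2 | h2
    · exact ⟨h2, hcorner h0 h1 h2 hv.symm hh.symm⟩
    · exact ⟨hcorner h1 h0 h2 hv hh, h2⟩
  refine ⟨{v, v'}, {h, h'}, Finset.card_pair hv.symm, Finset.card_pair hh.symm, ?_⟩
  refine (Finset.eq_of_subset_of_card_le (fun P hP => ?_) ?_).symm
  · obtain ⟨a, b⟩ := P
    simp only [Finset.mem_product, Finset.mem_insert, Finset.mem_singleton] at hP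
    rcases hP with ⟨rfl | rfl, rfl | rfl⟩
    exacts [h0, hboth.1, hboth.2, h1]
  · rw [Finset.card_product, Finset.card_pair hv.symm, Finset.card_pair hh.symm, hcard]

end FourPoints

section Rulings

/-- The product of the linear forms defining the rulings `{v} × ℙ¹` for `v ∈ s` and `ℙ¹ × {h}` for
`h ∈ t`, counted with multiplicity. -/
def rulingProduct (s t : Multiset ProjLine) : R4 :=
  (s.map fun v => xForm v.rep).prod * (t.map fun h => yForm h.rep).prod

variable {s t : Multiset ProjLine} {P : ProjLine × ProjLine} {π : R4} {n : ℕ}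

variable (s t) in
lemma isBiForm_rulingProduct : IsBiForm (rulingProduct s t) s.card t.card := by
  have hs : IsBiForm (s.map fun v => xForm v.rep).prod s.card 0 := by
    induction s using Multiset.induction with
    | empty => exact isWeightedHomogeneous_one ℂ biWeight
    | cons v s ih => simpa [add_comm] using (IsBiForm.xForm v.rep).mul ih
  have ht : IsBiForm (t.map fun h => yForm h.rep).prod 0 t.card := by
    induction t using Multiset.induction with
    | empty => exact isWeightedHomogeneous_one ℂ biWeight
    | cons h t ih => simpa [add_comm] using (IsBiForm.yForm h.rep).mul ih
  simpa [rulingProduct] using hs.mul ht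

open Classical in
lemma rulingProduct_mem (hn : n ≤ s.count P.1 + t.count P.2) :
    rulingProduct s t ∈ pointIdeal P ^ n := by
  have hx := Multiset.prod_dvd_prod_of_le (Multiset.map_le_map (f := fun v => xForm v.rep)
    (Multiset.le_count_iff_replicate_le.1 (le_refl (s.count P.1))))
  have hy := Multiset.prod_dvd_prod_of_le (Multiset.map_le_map (f := fun h => yForm h.rep)
    (Multiset.le_count_iff_replicate_le.1 (le_refl (t.count P.2))))
  rw [Multiset.map_replicate, Multiset.prod_replicate] at hx hy
  refine Ideal.mem_of_dvd _ (mul_dvd_mul hx hy) (Ideal.pow_le_pow_right hn ?_)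
  rw [pow_add]
  exact Ideal.mul_mem_mul (Ideal.pow_mem_pow (xForm_mem_pointIdeal P) _)
    (Ideal.pow_mem_pow (yForm_mem_pointIdeal P) _)

lemma exists_dvd_of_dvd_rulingProduct (hπ : Prime π) (h : π ∣ rulingProduct s t) :
    (∃ v ∈ s, π ∣ xForm v.rep) ∨ ∃ h ∈ t, π ∣ yForm h.rep :=
  (hπ.dvd_or_dvd h).imp hπ.exists_mem_multiset_map_dvd hπ.exists_mem_multiset_map_dvd

variable (s t) in
lemma rulingProduct_ne_zero : rulingProduct s t ≠ 0 := by
  refine mul_ne_zero (Multiset.prod_ne_zero fun h => ?_) (Multiset.prod_ne_zero fun h => ?_)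
  · obtain ⟨v, -, hv⟩ := Multiset.mem_map.1 h
    exact (irreducible_xForm v).ne_zero hv
  · obtain ⟨v, -, hv⟩ := Multiset.mem_map.1 h
    exact (irreducible_yForm v).ne_zero hv

end Rulings

section MultiplicityBounds

variable {W : Finset (ProjLine × ProjLine)} {P Q : ProjLine × ProjLine} {F G π : R4}
  {p q d e m : ℕ}

lemma exists_isBiForm_not_dvd (hπ : Irreducible π) (p q : ℕ) : ∃ G, IsBiForm G p q ∧ ¬ π ∣ G := by
  by_contra! h
  have hdvd (i : Fin 2) : ∃ j, Sum.elim id id j = i ∧ π ∣ X j := by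
    have hG := ((IsBiForm.X_inl i).pow p).mul ((IsBiForm.X_inr i).pow q)
    rw [mul_one, mul_zero, mul_zero, mul_one, add_zero, zero_add] at hG
    rcases hπ.prime.dvd_or_dvd (h _ hG) with hi | hi
    · exact ⟨Sum.inl i, rfl, hπ.prime.dvd_of_dvd_pow hi⟩
    · exact ⟨Sum.inr i, rfl, hπ.prime.dvd_of_dvd_pow hi⟩
  obtain ⟨j, hj, hπj⟩ := hdvd 0
  obtain ⟨k, hk, hπk⟩ := hdvd 1
  have hjk := (hπ.associated_of_dvd X_prime.irreducible hπj).symm.dvd.trans hπk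
  rw [X_dvd_X] at hjk
  exact zero_ne_one (hj.symm.trans ((congrArg _ hjk).trans hk))

namespace IsUnisolvent

lemma lagrange_mul_mem (hW : IsUnisolvent W p q) (hQ : Q ∈ W) (hG : evalAt P G = 0)
    (hLG : IsBiForm (hW.lagrange P * G) d e) : hW.lagrange P * G ∈ pointIdeal Q := by
  rw [hLG.mem_pointIdeal_iff, map_mul]
  rcases eq_or_ne Q P with rfl | hQP
  · rw [hG, mul_zero]
  · rw [hW.evalAt_lagrange_of_ne hQ hQP, zero_mul]

lemma multiplicity_le (hW : IsUnisolvent W p q) (hF0 : F ≠ 0) (hF : IsBiForm F d e)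
    (hFm : ∀ P ∈ W, F ∈ pointIdeal P ^ m) :
    (p + 1) * (q + 1) * m ≤ d * (q + 1) + (p + 1) * e := by
  have hbezout := bezout_inequality_of_movable (m := fun _ => m) (m' := fun _ => 1)
    (P := ((↑) : W → ProjLine × ProjLine)) (d' := p + 1) (e' := q + 1) Subtype.val_injective hF0 hF
    (fun P => hFm P.1 P.2) fun π hπ => ?_
  · simpa [hW.card_eq] using hbezout
  obtain ⟨G, hG, hπG⟩ := exists_isBiForm_not_dvd hπ p q
  obtain ⟨P, -, hπP⟩ : ∃ P ∈ W, ¬ π ∣ hW.lagrange P := by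
    by_contra! h
    exact hπG (hW.dvd_of_forall_dvd_lagrange hG fun P hP => Or.inr (h P hP))
  by_cases hπx : π ∣ xForm P.1.rep
  · obtain ⟨H, hH, hπH⟩ := exists_isBiForm_not_dvd hπ 1 0
    have hmul : IsBiForm (hW.lagrange P * (H * yForm P.2.rep)) (p + 1) (q + 1) := by
      simpa using (hW.isBiForm_lagrange P).mul (hH.mul (IsBiForm.yForm P.2.rep))
    refine ⟨_, hmul, fun Q => ?_, hπ.prime.not_dvd_mul hπP
      (hπ.prime.not_dvd_mul hπH (not_dvd_yForm_of_dvd_xForm hπ hπx))⟩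
    rw [pow_one]
    exact hW.lagrange_mul_mem Q.2 (by simp [wedge_self]) hmul
  · obtain ⟨H, hH, hπH⟩ := exists_isBiForm_not_dvd hπ 0 1
    have hmul : IsBiForm (hW.lagrange P * (H * xForm P.1.rep)) (p + 1) (q + 1) := by
      simpa using (hW.isBiForm_lagrange P).mul (hH.mul (IsBiForm.xForm P.1.rep))
    refine ⟨_, hmul, fun Q => ?_, hπ.prime.not_dvd_mul hπP (hπ.prime.not_dvd_mul hπH hπx)⟩
    rw [pow_one]
    exact hW.lagrange_mul_mem Q.2 (by simp [wedge_self]) hmul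

lemma exists_not_dvd_lagrange_mul_lagrange (hW : IsUnisolvent W 1 1)
    (hPW : ∀ Q ∈ W, Q ≠ P → Q.1 ≠ P.1 ∧ Q.2 ≠ P.2) (hπ : Irreducible π) :
    ∃ A B, A ≠ P ∧ B ≠ P ∧ A ≠ B ∧ ¬ π ∣ hW.lagrange A * hW.lagrange B := by
  by_contra! h
  obtain ⟨C, hC, hCP, hdvd⟩ : ∃ C ∈ W, C ≠ P ∧ ∀ A ∈ W, A ≠ P → A ≠ C → π ∣ hW.lagrange A := by
    by_cases hall : ∀ A ∈ W, A ≠ P → π ∣ hW.lagrange A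
    · obtain ⟨C, hC, hCP⟩ := Finset.exists_mem_ne (by rw [hW.card_eq]; norm_num) P
      exact ⟨C, hC, hCP, fun A hA hAP _ => hall A hA hAP⟩
    · push Not at hall
      obtain ⟨C, hC, hCP, hπC⟩ := hall
      exact ⟨C, hC, hCP, fun A _ hAP hAC =>
        (hπ.prime.dvd_or_dvd (h A C hAP hCP hAC)).resolve_right hπC⟩
  have hdvd_of_vanish {G : R4} (hG : IsBiForm G 1 1) (hGP : evalAt P G = 0)
      (hGC : evalAt C G = 0) : π ∣ G := by
    refine hW.dvd_of_forall_dvd_lagrange hG fun A hA => ?_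
    by_cases hAP : A = P
    · exact Or.inl (hAP ▸ hGP)
    by_cases hAC : A = C
    · exact Or.inl (hAC ▸ hGC)
    exact Or.inr (hdvd A hA hAP hAC)
  have hPC : π ∣ xForm P.1.rep * yForm C.2.rep :=
    hdvd_of_vanish ((IsBiForm.xForm _).mul (IsBiForm.yForm _)) (by simp [wedge_self])
      (by simp [wedge_self])
  have hCP' : π ∣ xForm C.1.rep * yForm P.2.rep :=
    hdvd_of_vanish ((IsBiForm.xForm _).mul (IsBiForm.yForm _)) (by simp [wedge_self])
      (by simp [wedge_self])
  rcases hπ.prime.dvd_or_dvd hPC with h1 | h1 <;> rcases hπ.prime.dvd_or_dvd hCP' with h2 | h2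
  · exact (hPW C hC hCP).1 (eq_of_dvd_xForm hπ h2 h1)
  · exact not_dvd_yForm_of_dvd_xForm hπ h1 h2
  · exact not_dvd_yForm_of_dvd_xForm hπ h2 h1
  · exact (hPW C hC hCP).2 (eq_of_dvd_yForm hπ h1 h2)

lemma five_mul_multiplicity_le (hW : IsUnisolvent W 1 1) (hP : P ∈ W)
    (hPW : ∀ Q ∈ W, Q ≠ P → Q.1 ≠ P.1 ∧ Q.2 ≠ P.2) (hF0 : F ≠ 0) (hF : IsBiForm F d e)
    (hFm : ∀ P ∈ W, F ∈ pointIdeal P ^ m) : 5 * m ≤ 2 * (d + e) := by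
  classical
  have hbezout := bezout_inequality_of_movable (m := fun _ => m)
    (m' := fun Q : W => if Q.1 = P then 2 else 1)
    (P := ((↑) : W → ProjLine × ProjLine)) (d' := 2) (e' := 2) Subtype.val_injective hF0 hF
    (fun P => hFm P.1 P.2) fun π hπ => ?_
  · have hsum : ∑ Q : W, (if Q.1 = P then 2 else 1) = 5 := by
      rw [Finset.sum_coe_sort W fun Q => if Q = P then 2 else 1, ← Finset.add_sum_erase W _ hP,
        if_pos rfl, Finset.sum_congr rfl fun Q hQ => if_neg (Finset.ne_of_mem_erase hQ),
        Finset.sum_const, Finset.card_erase_of_mem hP, hW.card_eq]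
      rfl
    rw [← Finset.mul_sum, hsum] at hbezout
    omega
  obtain ⟨A, B, hAP, hBP, hAB, hπAB⟩ := hW.exists_not_dvd_lagrange_mul_lagrange hPW hπ
  refine ⟨_, (hW.isBiForm_lagrange A).mul (hW.isBiForm_lagrange B), fun Q => ?_, hπAB⟩
  have hmem {R : ProjLine × ProjLine} (hQR : Q.1 ≠ R) : hW.lagrange R ∈ pointIdeal Q.1 :=
    (hW.isBiForm_lagrange R).mem_pointIdeal_iff.2 (hW.evalAt_lagrange_of_ne Q.2 hQR)
  split_ifs with hQP
  · rw [pow_two]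
    exact Ideal.mul_mem_mul (hmem (hQP ▸ hAP.symm)) (hmem (hQP ▸ hBP.symm))
  · rw [pow_one]
    by_cases hQA : Q.1 = A
    · exact Ideal.mul_mem_left _ _ (hmem (hQA ▸ hAB))
    · exact Ideal.mul_mem_right _ _ (hmem hQA)

end IsUnisolvent

lemma exists_isBiForm_two_three_not_dvd {v v' h₁ h₂ h₃ h₄ : ProjLine} (hπ : Irreducible π)
    (hv : v ≠ v') (h12 : h₁ ≠ h₂) (h13 : h₁ ≠ h₃) (h14 : h₁ ≠ h₄) (h23 : h₂ ≠ h₃) :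
    ∃ G, IsBiForm G 2 3 ∧ (∀ i, G ∈ pointIdeal (![(v, h₁), (v, h₂), (v', h₃), (v', h₄)] i) ^
      ![2, 1, 2, 1] i) ∧ ¬ π ∣ G := by
  by_contra! h
  have hdvd {s t : Multiset ProjLine} (hs : s.card = 2) (ht : t.card = 3)
      (hmem : ∀ i, rulingProduct s t ∈ pointIdeal (![(v, h₁), (v, h₂), (v', h₃), (v', h₄)] i) ^
        ![2, 1, 2, 1] i) :
      (∃ v ∈ s, π ∣ xForm v.rep) ∨ ∃ h ∈ t, π ∣ yForm h.rep :=
    exists_dvd_of_dvd_rulingProduct hπ.prime (h _ (hs ▸ ht ▸ isBiForm_rulingProduct s t) hmem)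
  have hA := hdvd (s := {v, v'}) (t := {h₁, h₃, h₃}) rfl rfl fun i => rulingProduct_mem (by
    fin_cases i <;> simp [Multiset.count_cons] <;> omega)
  have hB := hdvd (s := {v', v'}) (t := {h₂, h₁, h₁}) rfl rfl fun i => rulingProduct_mem (by
    fin_cases i <;> simp [Multiset.count_cons] <;> omega)
  have hC := hdvd (s := {v, v}) (t := {h₄, h₃, h₃}) rfl rfl fun i => rulingProduct_mem (by
    fin_cases i <;> simp [Multiset.count_cons] <;> omega)
  simp only [Multiset.insert_eq_cons, Multiset.mem_cons, Multiset.mem_singleton, exists_eq_or_imp,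
    exists_eq_left, or_self] at hA hB hC
  rcases hB with hB | hB | hB
  · rcases hC with hC | hC | hC
    · exact hv (eq_of_dvd_xForm hπ hC hB)
    all_goals exact not_dvd_yForm_of_dvd_xForm hπ hB hC
  · rcases hA with (hA | hA) | hA | hA
    · exact not_dvd_yForm_of_dvd_xForm hπ hA hB
    · exact not_dvd_yForm_of_dvd_xForm hπ hA hB
    · exact h12 (eq_of_dvd_yForm hπ hA hB)
    · exact h23 (eq_of_dvd_yForm hπ hB hA)
  · rcases hC with hC | hC | hC
    · exact not_dvd_yForm_of_dvd_xForm hπ hC hB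
    · exact h14 (eq_of_dvd_yForm hπ hB hC)
    · exact h13 (eq_of_dvd_yForm hπ hB hC)

lemma six_mul_multiplicity_le {v v' h₁ h₂ h₃ h₄ : ProjLine} (hF0 : F ≠ 0) (hF : IsBiForm F d e)
    (hF₁ : F ∈ pointIdeal (v, h₁) ^ m) (hF₂ : F ∈ pointIdeal (v, h₂) ^ m)
    (hF₃ : F ∈ pointIdeal (v', h₃) ^ m) (hF₄ : F ∈ pointIdeal (v', h₄) ^ m) (hv : v ≠ v')
    (h12 : h₁ ≠ h₂) (h13 : h₁ ≠ h₃) (h14 : h₁ ≠ h₄) (h23 : h₂ ≠ h₃) (h34 : h₃ ≠ h₄) :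
    6 * m ≤ 3 * d + 2 * e := by
  have hbezout := bezout_inequality_of_movable (m := fun _ => m) (m' := ![2, 1, 2, 1])
    (P := ![(v, h₁), (v, h₂), (v', h₃), (v', h₄)]) (d' := 2) (e' := 3) ?_ hF0 hF ?_
    fun π hπ => exists_isBiForm_two_three_not_dvd hπ hv h12 h13 h14 h23
  · simp only [Fin.sum_univ_four, Matrix.cons_val] at hbezout
    omega
  · intro i j hij
    fin_cases i <;> fin_cases j <;> simp_all
  · intro i
    fin_cases i
    exacts [hF₁, hF₂, hF₃, hF₄]

end MultiplicityBounds

section SymbolicPowers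

variable {Z : Finset (ProjLine × ProjLine)} {J : Ideal R4} {F : R4} {m t : ℕ}

lemma mem_symbPow : F ∈ symbPow Z m ↔ ∀ P ∈ Z, F ∈ pointIdeal P ^ m := by
  simp [symbPow]

lemma symbPow_le_symbPow {n : ℕ} (h : n ≤ m) : symbPow Z m ≤ symbPow Z n :=
  iInf₂_mono fun _ _ => Ideal.pow_le_pow_right h

lemma IsBiForm.mem_symbPow_one {p q : ℕ} (hF : IsBiForm F p q) :
    F ∈ symbPow Z 1 ↔ ∀ P ∈ Z, evalAt P F = 0 := by
  simp_rw [mem_symbPow, pow_one, hF.mem_pointIdeal_iff]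

lemma alphaStar_le (hFJ : F ∈ J) (hF0 : F ≠ 0) (hF : IsBiForm F t t) : alphaStar J ≤ t :=
  Nat.sInf_le ⟨F, hFJ, hF0, hF⟩

lemma exists_isBiForm_alphaStar (hFJ : F ∈ J) (hF0 : F ≠ 0) (hF : IsBiForm F t t) :
    ∃ G ∈ J, G ≠ 0 ∧ IsBiForm G (alphaStar J) (alphaStar J) :=
  Nat.sInf_mem (s := {t | ∃ F ∈ J, F ≠ 0 ∧ IsBiForm F t t}) ⟨t, F, hFJ, hF0, hF⟩

lemma exists_isBiForm_of_alphaStar_pos (h : 0 < alphaStar J) :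
    ∃ F ∈ J, F ≠ 0 ∧ IsBiForm F (alphaStar J) (alphaStar J) := by
  obtain ⟨t, F, hFJ, hF0, hF⟩ := Nat.nonempty_of_pos_sInf h
  exact exists_isBiForm_alphaStar hFJ hF0 hF

lemma alphaStar_symbPow_le_mul (hm : m ≠ 0) (h : 0 < alphaStar (symbPow Z m)) :
    alphaStar (symbPow Z m) ≤ m * alphaStar (symbPow Z 1) := by
  obtain ⟨F, hFm, hF0, hF⟩ := exists_isBiForm_of_alphaStar_pos h
  obtain ⟨G, hG1, hG0, hG⟩ :=
    exists_isBiForm_alphaStar (symbPow_le_symbPow (Nat.one_le_iff_ne_zero.2 hm) hFm) hF0 hF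
  refine alphaStar_le (mem_symbPow.2 fun P hP => ?_) (pow_ne_zero m hG0) (hG.pow m)
  exact Ideal.pow_mem_pow (pow_one (pointIdeal P) ▸ mem_symbPow.1 hG1 P hP) m

lemma exists_isUnisolvent_of_lt_alphaStar (ht : t < alphaStar (symbPow Z 1)) :
    ∃ W ⊆ Z, IsUnisolvent W t t := by
  refine exists_isUnisolvent_subset fun F hF hFZ => ?_
  by_contra hF0
  exact ht.not_ge (alphaStar_le (hF.mem_symbPow_one.2 hFZ) hF0 hF)

lemma alphaStar_symbPow_two_mul_product_le {s t : Finset ProjLine} {c : ℕ} (hs : s.card = c)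
    (ht : t.card = c) (n : ℕ) : alphaStar (symbPow (s ×ˢ t) (2 * n)) ≤ n * c := by
  classical
  have hF := isBiForm_rulingProduct (n • s.val) (n • t.val)
  rw [Multiset.card_nsmul, Multiset.card_nsmul, Finset.card_val, Finset.card_val, hs, ht] at hF
  refine alphaStar_le (mem_symbPow.2 fun P hP => rulingProduct_mem ?_)
    (rulingProduct_ne_zero _ _) hF
  rw [Finset.mem_product] at hP
  rw [Multiset.count_nsmul, Multiset.count_nsmul, Multiset.count_eq_one_of_mem s.nodup hP.1,
    Multiset.count_eq_one_of_mem t.nodup hP.2]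
  omega

end SymbolicPowers

section Grids

variable {W Z : Finset (ProjLine × ProjLine)} {F : R4} {m d e : ℕ}

lemma eq_or_eq_of_mem_vertical_rulings {v v' h₁ h₂ h₃ h₄ : ProjLine} (hF0 : F ≠ 0)
    (hF : IsBiForm F d e) (hlt : 3 * d + 2 * e < 6 * m) (hF₁ : F ∈ pointIdeal (v, h₁) ^ m)
    (hF₂ : F ∈ pointIdeal (v, h₂) ^ m) (hF₃ : F ∈ pointIdeal (v', h₃) ^ m)
    (hF₄ : F ∈ pointIdeal (v', h₄) ^ m) (hv : v ≠ v') (h12 : h₁ ≠ h₂) (h34 : h₃ ≠ h₄) :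
    h₁ = h₃ ∨ h₁ = h₄ := by
  by_contra! h
  rcases eq_or_ne h₂ h₃ with rfl | h23
  · exact hlt.not_ge (six_mul_multiplicity_le hF0 hF hF₁ hF₂ hF₄ hF₃ hv h12 h.2 h.1 h34 h34.symm)
  · exact hlt.not_ge (six_mul_multiplicity_le hF0 hF hF₁ hF₂ hF₃ hF₄ hv h12 h.1 h.2 h23 h34)

lemma eq_or_eq_of_mem_horizontal_rulings {h h' v₁ v₂ v₃ v₄ : ProjLine} (hF0 : F ≠ 0)
    (hF : IsBiForm F d e) (hlt : 2 * d + 3 * e < 6 * m) (hF₁ : F ∈ pointIdeal (v₁, h) ^ m)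
    (hF₂ : F ∈ pointIdeal (v₂, h) ^ m) (hF₃ : F ∈ pointIdeal (v₃, h') ^ m)
    (hF₄ : F ∈ pointIdeal (v₄, h') ^ m) (hh : h ≠ h') (v12 : v₁ ≠ v₂) (v34 : v₃ ≠ v₄) :
    v₁ = v₃ ∨ v₁ = v₄ :=
  eq_or_eq_of_mem_vertical_rulings ((map_ne_zero_iff _ swapRulings_injective).2 hF0) hF.swapRulings
    (by omega) (swapRulings_mem_pow hF₁) (swapRulings_mem_pow hF₂) (swapRulings_mem_pow hF₃)
    (swapRulings_mem_pow hF₄) hh v12 v34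

namespace IsUnisolvent

lemma mul_multiplicity_le_two_mul {t : ℕ} (hW : IsUnisolvent W t t) (hF0 : F ≠ 0)
    (hF : IsBiForm F d d) (hFm : ∀ P ∈ W, F ∈ pointIdeal P ^ m) : (t + 1) * m ≤ 2 * d := by
  refine Nat.le_of_mul_le_mul_left ?_ t.succ_pos
  linarith [hW.multiplicity_le hF0 hF hFm]

lemma exists_notMem_rulings (hW : IsUnisolvent W 1 1) (v h : ProjLine) :
    ∃ P ∈ W, P.1 ≠ v ∧ P.2 ≠ h := by
  by_contra! hvh
  refine mul_ne_zero (irreducible_xForm v).ne_zero (irreducible_yForm h).ne_zero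
    (hW.eq_zero ((IsBiForm.xForm v.rep).mul (IsBiForm.yForm h.rep)) fun P hP => ?_)
  rw [map_mul, mul_eq_zero, evalAt_xForm_rep_eq_zero_iff, evalAt_yForm_rep_eq_zero_iff]
  exact or_iff_not_imp_left.2 (hvh P hP)

lemma exists_eq_product (hW : IsUnisolvent W 1 1) (hF0 : F ≠ 0) (hF : IsBiForm F d e)
    (hFW : F ∈ symbPow W m) (h5 : 2 * (d + e) < 5 * m) (h6x : 3 * d + 2 * e < 6 * m)
    (h6y : 2 * d + 3 * e < 6 * m) :
    ∃ s t : Finset ProjLine, s.card = 2 ∧ t.card = 2 ∧ W = s ×ˢ t := by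
  classical
  have hFm := mem_symbPow.1 hFW
  refine exists_eq_product_of_card_eq_four hW.card_eq hW.exists_notMem_rulings
    (fun P hP => ?_) (fun h1 h2 h3 h4 => eq_or_eq_of_mem_vertical_rulings hF0 hF h6x
      (hFm _ h1) (hFm _ h2) (hFm _ h3) (hFm _ h4))
    (fun h1 h2 h3 h4 => eq_or_eq_of_mem_horizontal_rulings hF0 hF h6y
      (hFm _ h1) (hFm _ h2) (hFm _ h3) (hFm _ h4))
  by_contra! hP'
  exact h5.not_ge (hW.five_mul_multiplicity_le hP hP' hF0 hF hFm)

end IsUnisolvent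

-- By the exchange property, a further point of `Z` could replace a point of the grid, but a grid is
-- determined by any three of its points.
lemma exists_eq_product_of_isUnisolvent_subset (hWZ : W ⊆ Z) (hW : IsUnisolvent W 1 1) (hF0 : F ≠ 0)
    (hF : IsBiForm F d e) (hFZ : F ∈ symbPow Z m) (h5 : 2 * (d + e) < 5 * m)
    (h6x : 3 * d + 2 * e < 6 * m) (h6y : 2 * d + 3 * e < 6 * m) :
    ∃ s t : Finset ProjLine, s.card = 2 ∧ t.card = 2 ∧ Z = s ×ˢ t := by
  classical
  have hgrid {V : Finset (ProjLine × ProjLine)} (hVZ : V ⊆ Z) (hV : IsUnisolvent V 1 1) :=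
    hV.exists_eq_product hF0 hF (mem_symbPow.2 fun P hP => mem_symbPow.1 hFZ P (hVZ hP)) h5 h6x h6y
  obtain ⟨s, t, hs, ht, rfl⟩ := hgrid hWZ hW
  refine ⟨s, t, hs, ht, hWZ.antisymm' fun Q hQ => ?_⟩
  by_contra hQW
  obtain ⟨P, hP, hV⟩ := hW.exists_insert_erase hQW
  obtain ⟨s', t', -, -, hV'⟩ := hgrid
    (Finset.insert_subset hQ ((Finset.erase_subset _ _).trans hWZ)) hV
  have hmem {R} (hR : R ∈ s ×ˢ t) (hRP : R ≠ P) : R ∈ s' ×ˢ t' :=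
    hV' ▸ Finset.mem_insert_of_mem (Finset.mem_erase.2 ⟨hRP, hR⟩)
  obtain ⟨hPs, hPt⟩ := Finset.mem_product.1 hP
  obtain ⟨v, hv, hvP⟩ := Finset.exists_mem_ne (by rw [hs]; exact one_lt_two) P.1
  obtain ⟨h, hh, hhP⟩ := Finset.exists_mem_ne (by rw [ht]; exact one_lt_two) P.2
  have hPV : P ∈ s' ×ˢ t' := Finset.mem_product.2
    ⟨(Finset.mem_product.1 (hmem (R := (P.1, h)) (Finset.mk_mem_product hPs hh)
      fun hR => hhP (congrArg Prod.snd hR))).1,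
    (Finset.mem_product.1 (hmem (R := (v, P.2)) (Finset.mk_mem_product hv hPt)
      fun hR => hvP (congrArg Prod.fst hR))).2⟩
  rw [← hV', Finset.mem_insert] at hPV
  rcases hPV with rfl | hPV
  · exact hQW hP
  · exact Finset.notMem_erase P _ hPV

end Grids

theorem alphaStar_five_jumps_by_one_general (Z : Finset (ProjLine × ProjLine)) {m : ℕ} (hm : 6 ≤ m)
    (heven : Even m) (h : alphaStar (symbPow Z m) + 1 = alphaStar (symbPow Z 1) + m) :
    alphaStar (symbPow Z 1) = 1 := by
  have hpos : 0 < alphaStar (symbPow Z m) := by omega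
  obtain ⟨F, hFZ, hF0, hF⟩ := exists_isBiForm_of_alphaStar_pos hpos
  have hmul := hpos.trans_le (alphaStar_symbPow_le_mul (by omega) hpos)
  obtain ⟨k, hk⟩ := Nat.exists_eq_succ_of_ne_zero (Nat.pos_of_mul_pos_left hmul).ne'
  obtain ⟨W, hWZ, hW⟩ := exists_isUnisolvent_of_lt_alphaStar (hk ▸ k.lt_succ_self)
  have hle := hW.mul_multiplicity_le_two_mul hF0 hF fun P hP => mem_symbPow.1 hFZ P (hWZ hP)
  have hk1 : k ≤ 1 := by
    by_contra!
    nlinarith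
  interval_cases k
  · exact hk
  · obtain ⟨s, t, hs, ht, rfl⟩ := exists_eq_product_of_isUnisolvent_subset hWZ hW hF0 hF hFZ
      (by omega) (by omega) (by omega)
    obtain ⟨n, rfl⟩ := heven.exists_two_nsmul
    have := alphaStar_symbPow_two_mul_product_le hs ht n
    rw [smul_eq_mul] at h
    omega

/-- If the invariant `α*` of the radical ideal `I` of a finite set `Z` of distinct points of
`ℙ¹ × ℙ¹` jumps by exactly `1` in five consecutive steps, i.e.
`α*(I^{(6)}) = α*(I^{(5)}) + 1 = α*(I^{(4)}) + 2 = α*(I^{(3)}) + 3 = α*(I^{(2)}) + 4 = α*(I) + 5`,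
then `α*(I) = 1`, i.e. `Z` is contained in a divisor of bidegree `(1,1)`. -/
theorem alphaStar_five_jumps_by_one (Z : Finset (ProjLine × ProjLine))
    (h5 : alphaStar (symbPow Z 6) = alphaStar (symbPow Z 5) + 1)
    (h4 : alphaStar (symbPow Z 6) = alphaStar (symbPow Z 4) + 2)
    (h3 : alphaStar (symbPow Z 6) = alphaStar (symbPow Z 3) + 3)
    (h2 : alphaStar (symbPow Z 6) = alphaStar (symbPow Z 2) + 4)
    (h1 : alphaStar (symbPow Z 6) = alphaStar (symbPow Z 1) + 5) :
    alphaStar (symbPow Z 1) = 1 := by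
  exact alphaStar_five_jumps_by_one_general Z le_rfl (by decide) (by omega)
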